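/- (Local finiteness in bounded depth.) For every finite set q̄ of propositional variables and every n ≥ 0, the set of intuitionistic propositional formulas with variables among q̄ and depth ≤ n is partitioned into finitely many classes by the equivalence relation of mutual semantic entailment (φ ≈ ψ iff φ ⊨ ψ and ψ ⊨ φ). -/

import Mathlib

/-!
Send a formula to its denotation, the set of pointed finite Kripke models forcing it; formulas
with the same denotation entail each other, so it suffices that formulas of depth at most `n` over
`qbar` have finitely many denotations (`IPForm.finite_denote_image`). This is an induction on `n`.
Conjunction and disjunction denote intersection and union, and the denotation of `a → b` is
determined by those of `a` and `b`. Hence every denotation at depth `n + 1` lies in the lattice of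
sets generated by `⊥`, the variables in `qbar`, and the implications between the finitely many
denotations at depth `n` (`IPForm.denote_mem_latticeClosure`). The lattice of sets is distributive,
so its finitely generated sublattices are finite.
-/

/-- Intuitionistic propositional formulas over variables indexed by `ℕ`. -/
inductive IPForm : Type
  | var : ℕ → IPForm
  | bot : IPForm
  | conj : IPForm → IPForm → IPForm
  | disj : IPForm → IPForm → IPForm
  | impl : IPForm → IPForm → IPForm

/-- The set of propositional variables occurring in a formula. -/
def IPForm.vars : IPForm → Finset ℕ
  | .var p => {p}
  | .bot => ∅
  | .conj a b => a.vars ∪ b.vars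
  | .disj a b => a.vars ∪ b.vars
  | .impl a b => a.vars ∪ b.vars

/-- The implication-nesting depth of a formula. -/
def IPForm.depth : IPForm → ℕ
  | .var _ => 0
  | .bot => 0
  | .conj a b => max a.depth b.depth
  | .disj a b => max a.depth b.depth
  | .impl a b => max a.depth b.depth + 1

/-- An intuitionistic Kripke model: a preorder together with a persistent
valuation of the propositional variables. -/
structure KModel where
  W : Type
  rel : W → W → Prop
  refl : ∀ w, rel w w
  trans : ∀ {u v w}, rel u v → rel v w → rel u w
  val : ℕ → W → Prop
  mono : ∀ {p u v}, rel u v → val p u → val p v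

/-- The intuitionistic forcing relation. -/
def KModel.Forces (M : KModel) : M.W → IPForm → Prop
  | w, .var p => M.val p w
  | _, .bot => False
  | w, .conj a b => M.Forces w a ∧ M.Forces w b
  | w, .disj a b => M.Forces w a ∨ M.Forces w b
  | w, .impl a b => ∀ v, M.rel w v → M.Forces v a → M.Forces v b

/-- Semantic entailment over finite Kripke models. -/
def Entails (φ ψ : IPForm) : Prop :=
  ∀ (M : KModel), Finite M.W → ∀ w : M.W, M.Forces w φ → M.Forces w ψ

/-- A pointed finite Kripke model. -/
structure FinPointed where
  model : KModel
  finite : Finite model.W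
  point : model.W

/-- The denotation of a formula: the set of pointed finite Kripke models forcing it. -/
def IPForm.denote (φ : IPForm) : Set FinPointed :=
  {x | x.model.Forces x.point φ}

/-- Heyting implication at the level of sets of pointed finite models: move to any successor of
the point, keeping the model. -/
def impSet (A B : Set FinPointed) : Set FinPointed :=
  {x | ∀ v, x.model.rel x.point v →
    (⟨x.model, x.finite, v⟩ : FinPointed) ∈ A → (⟨x.model, x.finite, v⟩ : FinPointed) ∈ B}

theorem entails_of_denote_subset {φ ψ : IPForm} (h : φ.denote ⊆ ψ.denote) : Entails φ ψ :=
  fun M hM w hw => h (show (⟨M, hM, w⟩ : FinPointed) ∈ φ.denote from hw)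

/-- Conjunctions and disjunctions add nothing beyond the sublattice generated by a set `S` of
denotations, as soon as `S` contains those of the atoms (variables and `⊥`) and of the
implications within the given bounds. -/
theorem IPForm.denote_mem_latticeClosure (qbar : Finset ℕ) (n : ℕ) (S : Set (Set FinPointed))
    (hvar : ∀ p ∈ qbar, (IPForm.var p).denote ∈ S) (hbot : IPForm.bot.denote ∈ S)
    (himpl : ∀ a b : IPForm, (a.impl b).vars ⊆ qbar → (a.impl b).depth ≤ n →
      (a.impl b).denote ∈ S) :
    ∀ φ : IPForm, φ.vars ⊆ qbar → φ.depth ≤ n → φ.denote ∈ latticeClosure S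
  | .var p, hv, _ => subset_latticeClosure (hvar p (hv (Finset.mem_singleton_self p)))
  | .bot, _, _ => subset_latticeClosure hbot
  | .conj a b, hv, hd =>
    isSublattice_latticeClosure.infClosed
      (denote_mem_latticeClosure qbar n S hvar hbot himpl a
        (Finset.union_subset_left hv) (le_trans (le_max_left _ _) hd))
      (denote_mem_latticeClosure qbar n S hvar hbot himpl b
        (Finset.union_subset_right hv) (le_trans (le_max_right _ _) hd))
  | .disj a b, hv, hd =>
    isSublattice_latticeClosure.supClosed
      (denote_mem_latticeClosure qbar n S hvar hbot himpl a
        (Finset.union_subset_left hv) (le_trans (le_max_left _ _) hd))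
      (denote_mem_latticeClosure qbar n S hvar hbot himpl b
        (Finset.union_subset_right hv) (le_trans (le_max_right _ _) hd))
  | .impl a b, hv, hd => subset_latticeClosure (himpl a b hv hd)

/-- Only finitely many sets of pointed finite models are denoted by formulas of bounded depth
over finitely many variables. -/
theorem IPForm.finite_denote_image (qbar : Finset ℕ) (n : ℕ) :
    (IPForm.denote '' {φ | φ.vars ⊆ qbar ∧ φ.depth ≤ n}).Finite := by
  have hatoms : (insert IPForm.bot.denote
      ((fun p => (IPForm.var p).denote) '' (qbar : Set ℕ))).Finite :=
    (qbar.finite_toSet.image _).insert _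
  induction n with
  | zero =>
    refine hatoms.latticeClosure.subset ?_
    rintro _ ⟨φ, ⟨hv, hd⟩, rfl⟩
    refine denote_mem_latticeClosure qbar 0 _ (fun p hp => Or.inr ⟨p, hp, rfl⟩) (Or.inl rfl)
      (fun a b _ h => ?_) φ hv hd
    simp [IPForm.depth] at h
  | succ n ih =>
    refine (hatoms.union (ih.image2 impSet ih)).latticeClosure.subset ?_
    rintro _ ⟨φ, ⟨hv, hd⟩, rfl⟩
    refine denote_mem_latticeClosure qbar (n + 1) _ (fun p hp => Or.inl (Or.inr ⟨p, hp, rfl⟩))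
      (Or.inl (Or.inl rfl)) (fun a b hv hd => Or.inr ?_) φ hv hd
    have hmax : max a.depth b.depth ≤ n := Nat.le_of_succ_le_succ hd
    -- the denotation of `a → b` is by definition `impSet` of the denotations of `a` and `b`
    exact ⟨a.denote, ⟨a, ⟨Finset.union_subset_left hv, le_trans (le_max_left _ _) hmax⟩, rfl⟩,
      b.denote, ⟨b, ⟨Finset.union_subset_right hv, le_trans (le_max_right _ _) hmax⟩, rfl⟩, rfl⟩

/-- **Local finiteness in bounded depth.** For every finite set q̄ of variables
and every n, there are, up to mutual semantic entailment, only finitely many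
formulas with variables among q̄ and depth ≤ n: some finite set F of such
formulas contains a representative of every equivalence class. -/
theorem bounded_depth_locally_finite (qbar : Finset ℕ) (n : ℕ) :
    ∃ F : Finset IPForm,
      (∀ ψ ∈ F, ψ.vars ⊆ qbar ∧ ψ.depth ≤ n) ∧
      ∀ φ : IPForm, φ.vars ⊆ qbar → φ.depth ≤ n →
        ∃ ψ ∈ F, Entails φ ψ ∧ Entails ψ φ := by
  -- one representative for each of the finitely many denotations
  obtain ⟨T, hT, hTfin, himg⟩ :=
    (IPForm.finite_denote_image qbar n).exists_subset_finite_image_eq Set.Subset.rfl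
  refine ⟨hTfin.toFinset, fun ψ hψ => hT (hTfin.mem_toFinset.1 hψ), fun φ hv hd => ?_⟩
  have hφ : φ.denote ∈ IPForm.denote '' T := himg ▸ ⟨φ, ⟨hv, hd⟩, rfl⟩
  obtain ⟨ψ, hψ, h⟩ := hφ
  exact ⟨ψ, hTfin.mem_toFinset.2 hψ, entails_of_denote_subset h.ge, entails_of_denote_subset h.le⟩
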